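/- There is a universal constant C > 0 such that the following holds. Let P ∈ M_m(ℂ) be an m × m complex projection matrix (P = P* = P²), let Q ∈ M_m(ℂ) be a diagonal projection, and let B ∈ M_m(ℂ) be a diagonal matrix satisfying 0 ≤ B ≤ Q (entrywise on the diagonal, equivalently in the positive semidefinite order). Assume that the diagonal entries of Q P Q are each at most ε. Then there is a diagonal projection Q' ≤ Q (i.e., Q' Q = Q') such that ‖P Q' P − P B P‖ ≤ C ε^{1/8}. -/

import Mathlib

open Matrix

/-- The diagonal projection matrix whose `i`-th diagonal entry is `1` exactly when `i ∈ S`. -/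
def diagProj {m : ℕ} (S : Finset (Fin m)) : Matrix (Fin m) (Fin m) ℂ :=
  Matrix.diagonal fun i => if i ∈ S then 1 else 0

/-- The operator norm of a matrix, acting on Euclidean space. -/
noncomputable def opNorm {m : ℕ} (A : Matrix (Fin m) (Fin m) ℂ) : ℝ :=
  ‖Matrix.toEuclideanCLM (𝕜 := ℂ) A‖

/-!
For `x : n → ℝ` the compression `P diag(x) P` has norm at most `δ` as soon as `x` and `-x` both lie
above the roots of `g(x) = det(δ + P diag(x) P)`, that is, `g` is positive on the orthants
`x + ℝ≥0ⁿ` and `-x + ℝ≥0ⁿ`. One therefore looks for a set `T ⊆ S` such that `(b - 1_T, 1_T - b)`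
lies above the roots of the real stable multiaffine polynomial `g(u) g(v)` in two copies of the
variables.

Put each `i ∈ S` in `T` independently with probability `b i`: this translates `g(u) g(v)` by the
unit vector of a random one of the variables `uᵢ`, `vᵢ`. As in the work of Marcus, Spielman and
Srivastava, an interlacing argument reduces the choice of `T` to the expectation of the translated
polynomial, and the roots of the expectation are controlled by the barriers `∂f/f`: if they are at
most `1 - θ⁻¹` at a point, then averaging over one index and moving the point by `θ` times the mean
translation does not increase them. Let `c` be the total mean translation and `r = √ε`. At the
starting point `-r c` the barriers are at most `ε / (δ - r)`, which is `1 - (1 + r)⁻¹` for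
`δ = 2 r + ε`. Hence `θ = 1 + r` is allowed, and the point ends up exactly at `-r c + θ c = c`,
giving the bound `2 √ε + ε`.
-/

section Multiaffine

variable {σ K : Type*} [DecidableEq σ] [CommRing K]

/-- The forward difference of `f` in the coordinate `k`. For a multiaffine `f` this is the partial
derivative `∂f/∂xₖ`. -/
def partialDiff (f : (σ → K) → K) (k : σ) (x : σ → K) : K :=
  f (x + Pi.single k 1) - f x

/-- A function of several variables that is affine in each variable separately. -/
def IsMultiaffine (f : (σ → K) → K) : Prop :=
  ∀ x k t, f (x + Pi.single k t) = f x + t * partialDiff f k x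

lemma partialDiff_comm (f : (σ → K) → K) (k l : σ) :
    partialDiff (partialDiff f k) l = partialDiff (partialDiff f l) k := by
  funext x
  simp only [partialDiff, add_right_comm x (Pi.single l 1)]
  ring

namespace IsMultiaffine

variable {f : (σ → K) → K}

lemma sub_single (hf : IsMultiaffine f) (x : σ → K) (k : σ) (t : K) :
    f (x - Pi.single k t) = f x - t * partialDiff f k x := by
  rw [sub_eq_add_neg, ← Pi.single_neg, hf]
  ring

protected lemma partialDiff (hf : IsMultiaffine f) (k : σ) : IsMultiaffine (partialDiff f k) := by
  intro x j t
  rw [partialDiff_comm]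
  simp only [_root_.partialDiff, add_right_comm x (Pi.single j t), hf _ j t]
  ring

lemma partialDiff_add_single_self (hf : IsMultiaffine f) (x : σ → K) (k : σ) (t : K) :
    partialDiff f k (x + Pi.single k t) = partialDiff f k x := by
  rw [_root_.partialDiff, add_assoc, ← Pi.single_add, hf, hf]
  ring

lemma partialDiff_add_single_add_single (hf : IsMultiaffine f) (x : σ → K) (k l : σ) (s t : K) :
    partialDiff f k (x + Pi.single k s + Pi.single l t) =
      partialDiff f k x + t * partialDiff (partialDiff f k) l x := by
  rw [hf.partialDiff, hf.partialDiff_add_single_self, partialDiff_comm,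
    (hf.partialDiff l).partialDiff_add_single_self]

lemma add_single_add_single (hf : IsMultiaffine f) (x : σ → K) (k l : σ) (s t : K) :
    f (x + Pi.single k s + Pi.single l t) = f x + s * partialDiff f k x + t * partialDiff f l x +
      s * t * partialDiff (partialDiff f k) l x := by
  rw [hf, hf, hf.partialDiff l, partialDiff_comm]
  ring

end IsMultiaffine

variable [Algebra ℝ K]

/-- The mean of the translates of `f` by `-eₖ` and `-eₗ`, with weights `β` and `1 - β`: the expected
polynomial of a random choice between two translates. -/
def avgShift (k l : σ) (β : ℝ) (f : (σ → K) → K) (x : σ → K) : K :=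
  β • f (x - Pi.single k 1) + (1 - β) • f (x - Pi.single l 1)

/-- The derivative of `f` in the direction `β eₖ + (1 - β) eₗ`, for multiaffine `f`. -/
def avgDiff (k l : σ) (β : ℝ) (f : (σ → K) → K) (x : σ → K) : K :=
  β • partialDiff f k x + (1 - β) • partialDiff f l x

lemma partialDiff_avgShift (k l : σ) (β : ℝ) (f : (σ → K) → K) (j : σ) :
    partialDiff (avgShift k l β f) j = avgShift k l β (partialDiff f j) := by
  funext x
  simp only [partialDiff, avgShift, add_sub_right_comm, smul_sub]
  ring

lemma IsMultiaffine.avgShift_apply {f : (σ → K) → K} (hf : IsMultiaffine f) (k l : σ) (β : ℝ)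
    (x : σ → K) : avgShift k l β f x = f x - avgDiff k l β f x := by
  simp only [avgShift, avgDiff, hf.sub_single, one_mul, smul_sub, sub_smul, one_smul]
  ring

lemma IsMultiaffine.avgShift {f : (σ → K) → K} (hf : IsMultiaffine f) (k l : σ) (β : ℝ) :
    IsMultiaffine (avgShift k l β f) := by
  intro x j t
  rw [partialDiff_avgShift]
  simp only [_root_.avgShift, ← sub_add_eq_add_sub, hf _ j t, smul_add, mul_add, mul_smul_comm]
  ring

end Multiaffine

section AvgDir

variable {σ : Type*} [DecidableEq σ] {f : (σ → ℝ) → ℝ}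

/-- The direction `β eₖ + (1 - β) eₗ` of the derivative `avgDiff`. -/
def avgDir (k l : σ) (β : ℝ) : σ → ℝ :=
  Pi.single k β + Pi.single l (1 - β)

lemma smul_avgDir (k l : σ) (β t : ℝ) :
    t • avgDir k l β = Pi.single k (t * β) + Pi.single l (t * (1 - β)) := by
  rw [avgDir, smul_add, ← Pi.single_smul, ← Pi.single_smul, smul_eq_mul, smul_eq_mul]

lemma avgDir_nonneg (k l : σ) {β : ℝ} (hβ : β ∈ Set.Icc 0 1) : 0 ≤ avgDir k l β :=
  add_nonneg (Pi.single_nonneg.mpr hβ.1) (Pi.single_nonneg.mpr (sub_nonneg.mpr hβ.2))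

lemma IsMultiaffine.add_smul_avgDir (hf : IsMultiaffine f) (k l : σ) (β t : ℝ) (x : σ → ℝ) :
    f (x + t • avgDir k l β) = f x + avgDiff k l β f x * t +
      β * (1 - β) * partialDiff (partialDiff f k) l x * t ^ 2 := by
  rw [smul_avgDir, ← add_assoc, hf.add_single_add_single, avgDiff, smul_eq_mul, smul_eq_mul]
  ring

lemma IsMultiaffine.avgDiff_add_smul_avgDir (hf : IsMultiaffine f) (k l : σ) (β t : ℝ)
    (x : σ → ℝ) :
    avgDiff k l β f (x + t • avgDir k l β) = avgDiff k l β f x +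
      2 * (β * (1 - β) * partialDiff (partialDiff f k) l x) * t := by
  have hl : partialDiff f l (x + t • avgDir k l β) =
      partialDiff f l x + t * β * partialDiff (partialDiff f k) l x := by
    rw [smul_avgDir, add_comm (Pi.single k _), ← add_assoc, hf.partialDiff_add_single_add_single,
      partialDiff_comm]
  have hk : partialDiff f k (x + t • avgDir k l β) =
      partialDiff f k x + t * (1 - β) * partialDiff (partialDiff f k) l x := by
    rw [smul_avgDir, ← add_assoc, hf.partialDiff_add_single_add_single]
  simp only [avgDiff, hk, hl, smul_eq_mul]
  ring

end AvgDir

section Stability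

variable {σ : Type*} [DecidableEq σ]

/-- `p` is a stable multiaffine function (it has no zero with all coordinates in the open upper half
plane) whose restriction to real points is `f`. -/
structure IsStableExtension (p : (σ → ℂ) → ℂ) (f : (σ → ℝ) → ℝ) : Prop where
  continuous : Continuous p
  multiaffine : IsMultiaffine p
  apply_ofReal (x : σ → ℝ) : p (fun k => (x k : ℂ)) = f x
  ne_zero (z : σ → ℂ) : (∀ k, 0 < (z k).im) → p z ≠ 0

/-- A real multiaffine function is real stable if it extends to a complex one with no zero in the
product of open upper half planes. -/
def IsRealStable (f : (σ → ℝ) → ℝ) : Prop :=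
  ∃ p : (σ → ℂ) → ℂ, IsStableExtension p f

lemma ofReal_add_single (x : σ → ℝ) (k : σ) (t : ℝ) :
    (fun j => ((x + Pi.single k t : σ → ℝ) j : ℂ)) =
      (fun j => (x j : ℂ)) + Pi.single k (t : ℂ) := by
  funext j
  by_cases h : j = k
  · subst h
    simp
  · simp [h]

namespace IsStableExtension

variable {p : (σ → ℂ) → ℂ} {f : (σ → ℝ) → ℝ}

lemma partialDiff_ofReal (h : IsStableExtension p f) (k : σ) (x : σ → ℝ) :
    partialDiff p k (fun j => (x j : ℂ)) = partialDiff f k x := by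
  rw [partialDiff, ← Complex.ofReal_one, ← ofReal_add_single, h.apply_ofReal, h.apply_ofReal,
    partialDiff, Complex.ofReal_sub]

lemma partialDiff_partialDiff_ofReal (h : IsStableExtension p f) (k l : σ) (x : σ → ℝ) :
    partialDiff (partialDiff p k) l (fun j => (x j : ℂ)) = partialDiff (partialDiff f k) l x := by
  rw [partialDiff, ← Complex.ofReal_one, ← ofReal_add_single, h.partialDiff_ofReal,
    h.partialDiff_ofReal, ← Complex.ofReal_sub, ← partialDiff]

lemma real_multiaffine (h : IsStableExtension p f) : IsMultiaffine f := by
  intro x k t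
  have := h.multiaffine (fun j => (x j : ℂ)) k t
  rw [← ofReal_add_single, h.apply_ofReal, h.apply_ofReal, h.partialDiff_ofReal] at this
  exact_mod_cast this

/- If `∂ₖp / p = u ≠ 0` at `z`, then `p` vanishes at `z - u⁻¹ eₖ`, which therefore lies outside the
product of upper half planes. -/
lemma im_partialDiff_div_neg (h : IsStableExtension p f) (k : σ) {z : σ → ℂ}
    (hz : ∀ j, 0 < (z j).im) (hk : partialDiff p k z ≠ 0) : (partialDiff p k z / p z).im < 0 := by
  set u := partialDiff p k z / p z with hu
  have hpz : p z ≠ 0 := h.ne_zero z hz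
  have hu0 : u ≠ 0 := div_ne_zero hk hpz
  have hroot : p (z - Pi.single k u⁻¹) = 0 := by
    rw [h.multiaffine.sub_single, hu, inv_div, div_mul_cancel₀ _ hk, sub_self]
  have him : (z k).im ≤ (u⁻¹).im := by
    by_contra! hlt
    refine h.ne_zero _ (fun j => ?_) hroot
    rcases eq_or_ne j k with rfl | hj
    · simpa using hlt
    · simpa [hj] using hz j
  have hinv : 0 < (u⁻¹).im := (hz k).trans_le him
  rw [Complex.inv_im, div_pos_iff_of_pos_right (Complex.normSq_pos.mpr hu0)] at hinv
  linarith

lemma im_partialDiff_div_nonpos (h : IsStableExtension p f) (k : σ) {z : σ → ℂ}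
    (hz : ∀ j, 0 < (z j).im) : (partialDiff p k z / p z).im ≤ 0 := by
  by_cases hk : partialDiff p k z = 0
  · simp [hk]
  · exact (h.im_partialDiff_div_neg k hz hk).le

/- On the closed half planes `p` may vanish, so the quotient is replaced by a product before passing
to the limit. -/
lemma im_partialDiff_mul_conj_nonpos (h : IsStableExtension p f) (k : σ) {z : σ → ℂ}
    (hz : ∀ j, 0 ≤ (z j).im) : (partialDiff p k z * (starRingEnd ℂ) (p z)).im ≤ 0 := by
  have hopen : ∀ w : σ → ℂ, (∀ j, 0 < (w j).im) →
      (partialDiff p k w * (starRingEnd ℂ) (p w)).im ≤ 0 := by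
    intro w hw
    have hmul : partialDiff p k w * (starRingEnd ℂ) (p w) =
        partialDiff p k w / p w * Complex.normSq (p w) := by
      rw [← Complex.mul_conj, ← mul_assoc, div_mul_cancel₀ _ (h.ne_zero w hw)]
    rw [hmul, Complex.im_mul_ofReal]
    exact mul_nonpos_of_nonpos_of_nonneg (h.im_partialDiff_div_nonpos k hw)
      (Complex.normSq_nonneg _)
  set z' : ℝ → σ → ℂ := fun η => z + fun _ => η * Complex.I with hz'
  have hcont : Continuous fun η => (partialDiff p k (z' η) * (starRingEnd ℂ) (p (z' η))).im := by
    have := h.continuous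
    unfold partialDiff
    fun_prop
  have hzero : z' 0 = z := by simp [hz', ← Pi.zero_def]
  have hlim := (hcont.tendsto 0).mono_left (nhdsWithin_le_nhds (s := Set.Ioi 0))
  rw [hzero] at hlim
  refine le_of_tendsto hlim ?_
  filter_upwards [self_mem_nhdsWithin] with η hη
  exact hopen _ fun j => by simpa [hz'] using add_pos_of_nonneg_of_pos (hz j) hη

lemma avgShift (h : IsStableExtension p f) (k l : σ) {β : ℝ} (hβ : β ∈ Set.Icc 0 1) :
    IsStableExtension (avgShift k l β p) (avgShift k l β f) where
  continuous := by
    have := h.continuous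
    unfold _root_.avgShift
    fun_prop
  multiaffine := h.multiaffine.avgShift k l β
  apply_ofReal x := by
    rw [h.multiaffine.avgShift_apply, h.real_multiaffine.avgShift_apply, avgDiff, avgDiff,
      h.apply_ofReal, h.partialDiff_ofReal, h.partialDiff_ofReal]
    simp
  ne_zero z hz hzero := by
    have hpz := h.ne_zero z hz
    have hsum : β • (partialDiff p k z / p z) + (1 - β) • (partialDiff p l z / p z) = 1 := by
      rw [h.multiaffine.avgShift_apply, sub_eq_zero, avgDiff] at hzero
      rw [← smul_div_assoc, ← smul_div_assoc, ← add_div, ← hzero, div_self hpz]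
    have hterm : ∀ (j : σ) (γ : ℝ), 0 ≤ γ → 0 ≤ (γ • (partialDiff p j z / p z)).im →
        γ • (partialDiff p j z / p z) = 0 := by
      intro j γ hγ him
      rw [Complex.smul_im, smul_eq_mul] at him
      by_contra hne
      obtain ⟨hγ0, hj⟩ := smul_ne_zero_iff.mp hne
      have hneg := h.im_partialDiff_div_neg j hz (div_ne_zero_iff.mp hj).1
      exact (mul_neg_of_pos_of_neg (hγ.lt_of_ne' hγ0) hneg).not_ge him
    have hnonpos : ∀ (j : σ) (γ : ℝ), 0 ≤ γ → (γ • (partialDiff p j z / p z)).im ≤ 0 :=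
      fun j γ hγ => by
        simpa using mul_nonpos_of_nonneg_of_nonpos hγ (h.im_partialDiff_div_nonpos j hz)
    have him := congrArg Complex.im hsum
    rw [Complex.add_im, Complex.one_im] at him
    have hk := hterm k β hβ.1 (by linarith [hnonpos l (1 - β) (sub_nonneg.mpr hβ.2)])
    have hl := hterm l (1 - β) (sub_nonneg.mpr hβ.2) (by linarith [hnonpos k β hβ.1])
    rw [hk, hl, add_zero] at hsum
    exact zero_ne_one hsum

end IsStableExtension

namespace IsRealStable

variable {f : (σ → ℝ) → ℝ}

lemma multiaffine (hf : IsRealStable f) : IsMultiaffine f :=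
  let ⟨_, hp⟩ := hf; hp.real_multiaffine

lemma avgShift (hf : IsRealStable f) (k l : σ) {β : ℝ} (hβ : β ∈ Set.Icc 0 1) :
    IsRealStable (avgShift k l β f) :=
  let ⟨_, hp⟩ := hf; ⟨_, hp.avgShift k l hβ⟩

theorem mul_partialDiff_partialDiff_le (hf : IsRealStable f) (j k : σ) (x : σ → ℝ) :
    f x * partialDiff (partialDiff f k) j x ≤ partialDiff f j x * partialDiff f k x := by
  obtain ⟨p, hp⟩ := hf
  have him := hp.im_partialDiff_mul_conj_nonpos k
    (z := (fun l => (x l : ℂ)) + Pi.single j Complex.I) fun l => by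
      rcases eq_or_ne l j with rfl | hl
      · simp
      · simp [hl]
  rw [hp.multiaffine, hp.multiaffine.partialDiff k, hp.apply_ofReal, hp.partialDiff_ofReal,
    hp.partialDiff_ofReal, hp.partialDiff_partialDiff_ofReal] at him
  simp only [map_add, map_mul, Complex.conj_ofReal, Complex.conj_I, Complex.mul_im, Complex.add_re,
    Complex.add_im, Complex.mul_re, Complex.ofReal_re, Complex.ofReal_im, Complex.I_re,
    Complex.I_im, Complex.neg_re, Complex.neg_im] at him
  linarith

end IsRealStable

end Stability

section AboveRoots

variable {σ : Type*}

/-- `y` lies above the roots of `f` if `f` is positive on the orthant `y + ℝ≥0^σ`. -/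
def AboveRoots (f : (σ → ℝ) → ℝ) (y : σ → ℝ) : Prop :=
  ∀ w, y ≤ w → 0 < f w

lemma AboveRoots.mono {f : (σ → ℝ) → ℝ} {y w : σ → ℝ} (h : AboveRoots f y) (hw : y ≤ w) :
    AboveRoots f w :=
  fun v hv => h v (hw.trans hv)

variable [DecidableEq σ]

lemma le_add_single (w : σ → ℝ) (k : σ) {t : ℝ} (ht : 0 ≤ t) : w ≤ w + Pi.single k t :=
  le_add_of_nonneg_right (Pi.single_nonneg.mpr ht)

lemma antitoneOn_Ici_of_add_single_le [Finite σ] {α : Type*} [Preorder α] {F : (σ → ℝ) → α}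
    {y : σ → ℝ} (hF : ∀ w j t, y ≤ w → 0 ≤ t → F (w + Pi.single j t) ≤ F w) :
    AntitoneOn F (Set.Ici y) := by
  intro w hw w' _ hww'
  have := Fintype.ofFinite σ
  have hpartial : ∀ s : Finset σ, w ≤ w + ∑ k ∈ s, Pi.single k (w' k - w k) ∧
      F (w + ∑ k ∈ s, Pi.single k (w' k - w k)) ≤ F w := by
    intro s
    induction s using Finset.induction_on with
    | empty => simp
    | insert a s ha ih =>
      have hdiff : 0 ≤ w' a - w a := sub_nonneg.mpr (hww' a)
      rw [Finset.sum_insert ha, add_comm (Pi.single a _), ← add_assoc]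
      exact ⟨ih.1.trans (le_add_single _ a hdiff),
        (hF _ _ _ (le_trans hw ih.1) hdiff).trans ih.2⟩
  have hsum : w + ∑ k, Pi.single k (w' k - w k) = w' := by
    rw [Finset.univ_sum_single (fun k => w' k - w k)]
    exact add_sub_cancel w w'
  simpa only [hsum] using (hpartial Finset.univ).2

lemma IsMultiaffine.partialDiff_nonneg {f : (σ → ℝ) → ℝ} (hf : IsMultiaffine f) {y : σ → ℝ}
    (hy : ∀ w, y ≤ w → 0 ≤ f w) (k : σ) {w : σ → ℝ} (hw : y ≤ w) : 0 ≤ partialDiff f k w := by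
  by_contra! hneg
  have hs : 0 ≤ (f w + 1) / -partialDiff f k w :=
    div_nonneg (add_nonneg (hy w hw) zero_le_one) (neg_nonneg.mpr hneg.le)
  have hpos := hy _ (hw.trans (le_add_single w k hs))
  rw [hf, div_neg, neg_mul, div_mul_cancel₀ _ hneg.ne] at hpos
  linarith

lemma avgDiff_div (k l : σ) (β : ℝ) (f : (σ → ℝ) → ℝ) (w : σ → ℝ) :
    avgDiff k l β f w / f w =
      β * (partialDiff f k w / f w) + (1 - β) * (partialDiff f l w / f w) := by
  rw [avgDiff, smul_eq_mul, smul_eq_mul, add_div, mul_div_assoc, mul_div_assoc]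

namespace IsRealStable

variable {f : (σ → ℝ) → ℝ} {y : σ → ℝ} {k l : σ} {β : ℝ}

lemma partialDiff_nonneg_of_eq_zero (hf : IsRealStable f) {j : σ} {x : σ → ℝ} (hx : f x = 0)
    (hj : 0 < partialDiff f j x) (k : σ) : 0 ≤ partialDiff f k x := by
  have hRayleigh := hf.mul_partialDiff_partialDiff_le j k x
  rw [hx, zero_mul] at hRayleigh
  exact nonneg_of_mul_nonneg_right hRayleigh hj

lemma mul_avgDiff_partialDiff_le (hf : IsRealStable f) (hβ : β ∈ Set.Icc 0 1) (j : σ)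
    (x : σ → ℝ) :
    f x * avgDiff k l β (partialDiff f j) x ≤ avgDiff k l β f x * partialDiff f j x := by
  have hk := mul_le_mul_of_nonneg_left (hf.mul_partialDiff_partialDiff_le k j x) hβ.1
  have hl := mul_le_mul_of_nonneg_left (hf.mul_partialDiff_partialDiff_le l j x)
    (sub_nonneg.mpr hβ.2)
  simp only [avgDiff, smul_eq_mul]
  linarith

/- If `f` changed sign along `eⱼ`, then at the root all first derivatives of `f` would be
nonnegative, so that the averaged shift `f - avgDiff f` would not be positive there. -/
lemma pos_of_pos_add_single (hf : IsRealStable f) (hβ : β ∈ Set.Icc 0 1)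
    (hy : AboveRoots (_root_.avgShift k l β f) y) {w : σ → ℝ} (hw : y ≤ w) {j : σ} {t : ℝ}
    (ht : 0 ≤ t) (hpos : 0 < f (w + Pi.single j t)) : 0 < f w := by
  by_contra! hneg
  rw [hf.multiaffine] at hpos
  have hj : 0 < partialDiff f j w := pos_of_mul_pos_right (by linarith) ht
  set s := -f w / partialDiff f j w
  have hs : 0 ≤ s := div_nonneg (neg_nonneg.mpr hneg) hj.le
  have hroot : f (w + Pi.single j s) = 0 := by
    rw [hf.multiaffine, div_mul_cancel₀ _ hj.ne', add_neg_cancel]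
  have hderiv := hf.partialDiff_nonneg_of_eq_zero hroot
    (hj.trans_eq (hf.multiaffine.partialDiff_add_single_self w j s).symm)
  have havg := hy _ (hw.trans (le_add_single w j hs))
  rw [hf.multiaffine.avgShift_apply, hroot, avgDiff] at havg
  have hk := mul_nonneg hβ.1 (hderiv k)
  have hl := mul_nonneg (sub_nonneg.mpr hβ.2) (hderiv l)
  simp only [smul_eq_mul] at havg
  linarith

variable [Finite σ]

lemma antitoneOn_partialDiff_div (hf : IsRealStable f) (hy : AboveRoots f y) (k : σ) :
    AntitoneOn (fun w => partialDiff f k w / f w) (Set.Ici y) := by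
  refine antitoneOn_Ici_of_add_single_le fun w j t hw ht => ?_
  rw [div_le_div_iff₀ (hy _ (hw.trans (le_add_single w j ht))) (hy w hw), hf.multiaffine,
    hf.multiaffine.partialDiff]
  have := mul_le_mul_of_nonneg_left (hf.mul_partialDiff_partialDiff_le j k w) ht
  linarith

lemma antitoneOn_avgDiff_div (hf : IsRealStable f) (hy : AboveRoots f y) (k l : σ)
    (hβ : β ∈ Set.Icc 0 1) : AntitoneOn (fun w => avgDiff k l β f w / f w) (Set.Ici y) := by
  intro v hv w hw hvw
  simp only [avgDiff_div]
  exact add_le_add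
    (mul_le_mul_of_nonneg_left (hf.antitoneOn_partialDiff_div hy k hv hw hvw) hβ.1)
    (mul_le_mul_of_nonneg_left (hf.antitoneOn_partialDiff_div hy l hv hw hvw)
      (sub_nonneg.mpr hβ.2))

lemma aboveRoots_of_avgShift (hf : IsRealStable f) (hβ : β ∈ Set.Icc 0 1) {a : σ → ℝ}
    (ha : AboveRoots f a) (hy : AboveRoots (_root_.avgShift k l β f) y) : AboveRoots f y := by
  intro w hw
  have hanti : AntitoneOn (fun w => 0 < f w) (Set.Ici y) :=
    antitoneOn_Ici_of_add_single_le fun _ _ _ hv ht => hf.pos_of_pos_add_single hβ hy hv ht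
  exact hanti hw (le_sup_of_le_left hw) (le_sup_left : w ≤ w ⊔ a) (ha _ le_sup_right)

lemma aboveRoots_sub_single (hf : IsRealStable f) (hy : AboveRoots f y)
    (hk : partialDiff f k y < f y) : AboveRoots f (y - Pi.single k 1) := by
  intro w hw
  have hw' : y ≤ w + Pi.single k 1 := sub_le_iff_le_add.mp hw
  have hratio : partialDiff f k (w + Pi.single k 1) / f (w + Pi.single k 1) < 1 :=
    (hf.antitoneOn_partialDiff_div hy k Set.self_mem_Ici hw' hw').trans_lt
      ((div_lt_one (hy y le_rfl)).mpr hk)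
  rw [div_lt_one (hy _ hw'), hf.multiaffine.partialDiff_add_single_self, hf.multiaffine] at hratio
  linarith

lemma aboveRoots_sub_single_or (hf : IsRealStable f) (hβ : β ∈ Set.Icc 0 1) {a : σ → ℝ}
    (ha : AboveRoots f a) (hy : AboveRoots (_root_.avgShift k l β f) y) :
    AboveRoots f (y - Pi.single k 1) ∨ AboveRoots f (y - Pi.single l 1) := by
  have hfy := hf.aboveRoots_of_avgShift hβ ha hy
  refine (lt_or_ge (partialDiff f k y) (f y)).imp (hf.aboveRoots_sub_single hfy) fun hk => ?_
  refine hf.aboveRoots_sub_single hfy (lt_of_not_ge fun hl => ?_)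
  have havg := hy y le_rfl
  rw [hf.multiaffine.avgShift_apply, avgDiff, smul_eq_mul, smul_eq_mul] at havg
  have hk' := mul_le_mul_of_nonneg_left hk hβ.1
  have hl' := mul_le_mul_of_nonneg_left hl (sub_nonneg.mpr hβ.2)
  linarith

end IsRealStable

end AboveRoots

section Barrier

variable {A B C A' B' C' θ : ℝ}

/- With `Wᵢ` the coefficients of the Wronskian `W₀ + 2 W₁ t + W₂ t²`, its sign gives `W₁² ≤ W₀ W₂`,
and the Plücker relation `A W₂ = B W₁ - C W₀` eliminates `W₂`. -/
lemma wronskian_coeff_bounds (hA : 0 < A) (hB : 0 ≤ B) (hC : 0 ≤ C)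
    (hW : ∀ t : ℝ, (A + B * t + C * t ^ 2) * (B' + 2 * C' * t) ≤
      (B + 2 * C * t) * (A' + B' * t + C' * t ^ 2)) :
    A * B' - A' * B ≤ 0 ∧ A * C' - A' * C ≤ 0 ∧
      0 ≤ A * (A * C' - A' * C) - B * (A * B' - A' * B) := by
  set W₀ := A * B' - A' * B with hW₀
  set W₁ := A * C' - A' * C with hW₁
  set W₂ := B * C' - B' * C with hW₂
  have hquad : ∀ t : ℝ, W₂ * (t * t) + 2 * W₁ * t + W₀ ≤ 0 := fun t => by
    linear_combination hW t
  have h₀ : W₀ ≤ 0 := by simpa using hquad 0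
  have hdisc : W₁ ^ 2 ≤ W₀ * W₂ := by
    have := discrim_le_zero_of_nonpos hquad
    rw [discrim] at this
    linarith
  have hplucker : A * W₂ = B * W₁ - C * W₀ := by
    rw [hW₀, hW₁, hW₂]
    ring
  have hkey : A * W₁ ^ 2 + C * W₀ ^ 2 ≤ W₁ * (B * W₀) := by
    have := mul_le_mul_of_nonneg_left hdisc hA.le
    linear_combination this + W₀ * hplucker
  have hCW : 0 ≤ C * W₀ ^ 2 := by positivity
  have hBW : B * W₀ ≤ 0 := mul_nonpos_of_nonneg_of_nonpos hB h₀
  have h₁ : W₁ ≤ 0 := by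
    by_contra! h
    have hAW : 0 < A * W₁ ^ 2 := by positivity
    linarith [mul_nonpos_of_nonneg_of_nonpos h.le hBW]
  refine ⟨h₀, h₁, ?_⟩
  rcases h₁.lt_or_eq with h | h
  · refine nonneg_of_mul_nonpos_right (a := W₁) ?_ h
    linarith
  · rw [h]
    linarith

/- With `p = A + B t + C t²` and `q = A' + B' t + C' t²`, this says that the tangent to `q / p` at
`θ` lies below `q / p` at `0`. -/
lemma tangent_div_le (hA : 0 < A) (hB : 0 ≤ B) (hC : 0 ≤ C) (hθ : 0 ≤ θ)
    (hW : ∀ t : ℝ, (A + B * t + C * t ^ 2) * (B' + 2 * C' * t) ≤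
      (B + 2 * C * t) * (A' + B' * t + C' * t ^ 2)) :
    ((A' + B' * θ + C' * θ ^ 2) * (A + B * θ + C * θ ^ 2) +
      θ * ((B + 2 * C * θ) * (A' + B' * θ + C' * θ ^ 2) -
        (A + B * θ + C * θ ^ 2) * (B' + 2 * C' * θ))) * A ≤
      A' * (A + B * θ + C * θ ^ 2) ^ 2 := by
  obtain ⟨h₀, h₁, h₀₁⟩ := wronskian_coeff_bounds hA hB hC hW
  have h₂ : 0 ≤ 2 * C * θ * -(A * B' - A' * B) := mul_nonneg (by positivity) (neg_nonneg.mpr h₀)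
  have h₃ : 0 ≤ C * θ ^ 2 * -(A * C' - A' * C) := mul_nonneg (by positivity) (neg_nonneg.mpr h₁)
  have h₄ := mul_nonneg (sq_nonneg θ) (add_nonneg (add_nonneg h₀₁ h₂) h₃)
  linear_combination h₄

namespace IsRealStable

variable {σ : Type*} [DecidableEq σ] {f : (σ → ℝ) → ℝ} {y : σ → ℝ} {k l : σ} {β θ : ℝ}

lemma tangent_partialDiff_div_le (hf : IsRealStable f) (hy : AboveRoots f y)
    (hβ : β ∈ Set.Icc 0 1) (hθ : 0 ≤ θ) (j : σ) {y' : σ → ℝ} (hy' : y' = y + θ • avgDir k l β) :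
    (partialDiff f j y' * f y' + θ * (avgDiff k l β f y' * partialDiff f j y' -
      f y' * avgDiff k l β (partialDiff f j) y')) * f y ≤ partialDiff f j y * f y' ^ 2 := by
  have hderiv : ∀ (i : σ) (w : σ → ℝ), y ≤ w → 0 ≤ partialDiff f i w := fun i _ =>
    hf.multiaffine.partialDiff_nonneg (fun v hv => (hy v hv).le) i
  have hB : 0 ≤ avgDiff k l β f y :=
    add_nonneg (mul_nonneg hβ.1 (hderiv k y le_rfl))
      (mul_nonneg (sub_nonneg.mpr hβ.2) (hderiv l y le_rfl))
  have hC : 0 ≤ β * (1 - β) * partialDiff (partialDiff f k) l y :=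
    mul_nonneg (mul_nonneg hβ.1 (sub_nonneg.mpr hβ.2))
      ((hf.multiaffine.partialDiff k).partialDiff_nonneg (hderiv k) l le_rfl)
  have hW := fun t : ℝ =>
    hf.mul_avgDiff_partialDiff_le (k := k) (l := l) hβ j (y + t • avgDir k l β)
  simp only [hf.multiaffine.add_smul_avgDir, (hf.multiaffine.partialDiff j).add_smul_avgDir,
    hf.multiaffine.avgDiff_add_smul_avgDir,
    (hf.multiaffine.partialDiff j).avgDiff_add_smul_avgDir] at hW
  subst hy'
  simp only [hf.multiaffine.add_smul_avgDir, (hf.multiaffine.partialDiff j).add_smul_avgDir,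
    hf.multiaffine.avgDiff_add_smul_avgDir,
    (hf.multiaffine.partialDiff j).avgDiff_add_smul_avgDir]
  exact tangent_div_le (hy y le_rfl) hB hC hθ hW

variable [Finite σ]

lemma le_mul_avgShift (hf : IsRealStable f) (hy : AboveRoots f y) (hβ : β ∈ Set.Icc 0 1)
    (hθ : 0 < θ) (hratio : avgDiff k l β f y / f y ≤ 1 - θ⁻¹) {w : σ → ℝ} (hw : y ≤ w) :
    f w ≤ θ * _root_.avgShift k l β f w := by
  have hw' : avgDiff k l β f w / f w ≤ 1 - θ⁻¹ :=
    (hf.antitoneOn_avgDiff_div hy k l hβ Set.self_mem_Ici hw hw).trans hratio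
  have hbound : θ⁻¹ * f w ≤ f w - avgDiff k l β f w := by
    rw [div_le_iff₀ (hy w hw)] at hw'
    linarith
  rwa [hf.multiaffine.avgShift_apply, ← inv_mul_le_iff₀ hθ]

lemma aboveRoots_avgShift (hf : IsRealStable f) (hy : AboveRoots f y) (hβ : β ∈ Set.Icc 0 1)
    (hθ : 0 < θ) (hratio : avgDiff k l β f y / f y ≤ 1 - θ⁻¹) :
    AboveRoots (_root_.avgShift k l β f) y := fun w hw =>
  pos_of_mul_pos_right ((hy w hw).trans_le (hf.le_mul_avgShift hy hβ hθ hratio hw)) hθ.le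

theorem partialDiff_avgShift_div_le (hf : IsRealStable f) (hy : AboveRoots f y)
    (hβ : β ∈ Set.Icc 0 1) (hθ : 0 < θ) (hratio : avgDiff k l β f y / f y ≤ 1 - θ⁻¹) (j : σ) :
    partialDiff (_root_.avgShift k l β f) j (y + θ • avgDir k l β) /
      _root_.avgShift k l β f (y + θ • avgDir k l β) ≤ partialDiff f j y / f y := by
  set y' := y + θ • avgDir k l β with hy'
  have hle : y ≤ y' := le_add_of_nonneg_right (smul_nonneg hθ.le (avgDir_nonneg k l hβ))
  have hshift := hf.le_mul_avgShift hy hβ hθ hratio hle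
  have hpos := hf.aboveRoots_avgShift hy hβ hθ hratio y' hle
  have hfy := hy y le_rfl
  have hfy' := hy y' hle
  have htangent := hf.tangent_partialDiff_div_le hy hβ hθ.le j hy'
  have hwronskian := hf.mul_avgDiff_partialDiff_le (k := k) (l := l) hβ j y'
  rw [partialDiff_avgShift, (hf.multiaffine.partialDiff j).avgShift_apply]
  rw [hf.multiaffine.avgShift_apply] at hshift hpos ⊢
  rw [div_le_div_iff₀ hpos hfy]
  generalize avgDiff k l β f y' = B at *
  generalize avgDiff k l β (partialDiff f j) y' = D at *
  generalize partialDiff f j y' = q at *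
  generalize f y' = p at *
  refine le_of_mul_le_mul_left ?_ (pow_pos hfy' 2)
  calc p ^ 2 * ((q - D) * f y)
      = (p * q * (p - B) + (B * q - p * D) * p) * f y := by ring
    _ ≤ (p * q * (p - B) + (B * q - p * D) * (θ * (p - B))) * f y := by
        gcongr
    _ = (q * p + θ * (B * q - p * D)) * f y * (p - B) := by ring
    _ ≤ partialDiff f j y * p ^ 2 * (p - B) := by gcongr
    _ = p ^ 2 * (partialDiff f j y * (p - B)) := by ring

end IsRealStable

end Barrier

section Choice

variable {σ ι : Type*} [DecidableEq σ] [Finite σ]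

lemma IsRealStable.avgDiff_avgShift_div_le {f : (σ → ℝ) → ℝ} {y : σ → ℝ} {k l : σ} {β θ : ℝ}
    (hf : IsRealStable f) (hy : AboveRoots f y) (hβ : β ∈ Set.Icc 0 1) (hθ : 0 < θ)
    (hratio : avgDiff k l β f y / f y ≤ 1 - θ⁻¹) (i j : σ) {γ : ℝ} (hγ : γ ∈ Set.Icc 0 1) :
    avgDiff i j γ (_root_.avgShift k l β f) (y + θ • avgDir k l β) /
      _root_.avgShift k l β f (y + θ • avgDir k l β) ≤ avgDiff i j γ f y / f y := by
  rw [avgDiff_div, avgDiff_div]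
  exact add_le_add
    (mul_le_mul_of_nonneg_left (hf.partialDiff_avgShift_div_le hy hβ hθ hratio i) hγ.1)
    (mul_le_mul_of_nonneg_left (hf.partialDiff_avgShift_div_le hy hβ hθ hratio j)
      (sub_nonneg.mpr hγ.2))

/- Averaging over the choice at one index `a` keeps the barrier ratios below their initial value, so
the remaining choices can be made for the averaged function before the one at `a`. -/
theorem IsRealStable.exists_choice_aboveRoots {f : (σ → ℝ) → ℝ} {y : σ → ℝ} (hf : IsRealStable f)
    (hy : AboveRoots f y) (k l : ι → σ) {β : ι → ℝ} {θ : ℝ} (hθ : 0 < θ) (S : Finset ι)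
    (hβ : ∀ i ∈ S, β i ∈ Set.Icc 0 1)
    (hratio : ∀ i ∈ S, avgDiff (k i) (l i) (β i) f y / f y ≤ 1 - θ⁻¹) :
    ∃ c : ι → σ, (∀ i, c i = k i ∨ c i = l i) ∧
      AboveRoots f
        (y + θ • ∑ i ∈ S, avgDir (k i) (l i) (β i) - ∑ i ∈ S, Pi.single (c i) 1) := by
  classical
  induction S using Finset.induction_on generalizing f y with
  | empty => exact ⟨k, fun i => .inl rfl, by simpa using hy⟩
  | insert a S ha ih =>
    rw [Finset.forall_mem_insert] at hβ hratio
    have hle : y ≤ y + θ • avgDir (k a) (l a) (β a) :=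
      le_add_of_nonneg_right (smul_nonneg hθ.le (avgDir_nonneg _ _ hβ.1))
    obtain ⟨c, hc, hroots⟩ := ih (hf.avgShift (k a) (l a) hβ.1)
      ((hf.aboveRoots_avgShift hy hβ.1 hθ hratio.1).mono hle) hβ.2 fun i hi =>
        (hf.avgDiff_avgShift_div_le hy hβ.1 hθ hratio.1 _ _ (hβ.2 i hi)).trans (hratio.2 i hi)
    have hupdate : ∀ s : σ, y + θ • ∑ i ∈ insert a S, avgDir (k i) (l i) (β i) -
        ∑ i ∈ insert a S, Pi.single (Function.update c a s i) 1 =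
        y + θ • avgDir (k a) (l a) (β a) + θ • ∑ i ∈ S, avgDir (k i) (l i) (β i) -
          ∑ i ∈ S, Pi.single (c i) 1 - Pi.single s 1 := fun s => by
      have hc' : ∑ i ∈ S, (Pi.single (Function.update c a s i) 1 : σ → ℝ) =
          ∑ i ∈ S, Pi.single (c i) 1 :=
        Finset.sum_congr rfl fun i hi => by
          rw [Function.update_of_ne (ne_of_mem_of_not_mem hi ha)]
      rw [Finset.sum_insert ha, Finset.sum_insert ha, Function.update_self, hc', smul_add]
      abel
    have hchoice : ∀ s : σ, s = k a ∨ s = l a → ∀ i,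
        Function.update c a s i = k i ∨ Function.update c a s i = l i := fun s hs i => by
      rcases eq_or_ne i a with rfl | hi
      · rwa [Function.update_self]
      · rw [Function.update_of_ne hi]
        exact hc i
    rcases hf.aboveRoots_sub_single_or hβ.1 hy hroots with h | h
    · exact ⟨_, hchoice (k a) (.inl rfl), by rwa [hupdate]⟩
    · exact ⟨_, hchoice (l a) (.inr rfl), by rwa [hupdate]⟩

end Choice

section SumMul

variable {σ τ K : Type*} [CommRing K]

/-- The product of `g` and `h`, regarded as functions of disjoint sets of variables. -/
def sumMul (g : (σ → K) → K) (h : (τ → K) → K) (z : σ ⊕ τ → K) : K :=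
  g (z ∘ Sum.inl) * h (z ∘ Sum.inr)

lemma AboveRoots.sumMul {g : (σ → ℝ) → ℝ} {h : (τ → ℝ) → ℝ} {z : σ ⊕ τ → ℝ}
    (hg : AboveRoots g (z ∘ Sum.inl)) (hh : AboveRoots h (z ∘ Sum.inr)) :
    AboveRoots (sumMul g h) z :=
  fun _ hw => mul_pos (hg _ fun i => hw (.inl i)) (hh _ fun j => hw (.inr j))

lemma aboveRoots_inl_of_sumMul {g : (σ → ℝ) → ℝ} {h : (τ → ℝ) → ℝ} {z : σ ⊕ τ → ℝ} {a : τ → ℝ}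
    (ha : AboveRoots h a) (hz : AboveRoots (sumMul g h) z) : AboveRoots g (z ∘ Sum.inl) := by
  intro w hw
  have hpos := hz (Sum.elim w (z ∘ Sum.inr ⊔ a)) (Sum.rec hw fun _ => le_sup_left)
  exact pos_of_mul_pos_left hpos (ha _ le_sup_right).le

lemma aboveRoots_inr_of_sumMul {g : (σ → ℝ) → ℝ} {h : (τ → ℝ) → ℝ} {z : σ ⊕ τ → ℝ} {a : σ → ℝ}
    (ha : AboveRoots g a) (hz : AboveRoots (sumMul g h) z) : AboveRoots h (z ∘ Sum.inr) := by
  intro w hw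
  have hpos := hz (Sum.elim (z ∘ Sum.inl ⊔ a) w) (Sum.rec (fun _ => le_sup_left) hw)
  exact pos_of_mul_pos_right hpos (ha _ le_sup_right).le

variable [DecidableEq σ] [DecidableEq τ]

lemma add_single_inl_comp_inl (z : σ ⊕ τ → K) (i : σ) (t : K) :
    (z + Pi.single (Sum.inl i) t) ∘ Sum.inl = z ∘ Sum.inl + Pi.single i t := by
  rw [Pi.add_comp, Pi.single, Sum.update_inl_comp_inl, Pi.zero_comp, Pi.single]

lemma add_single_inl_comp_inr (z : σ ⊕ τ → K) (i : σ) (t : K) :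
    (z + Pi.single (Sum.inl i) t) ∘ Sum.inr = z ∘ Sum.inr := by
  rw [Pi.add_comp, Pi.single, Sum.update_inl_comp_inr, Pi.zero_comp, add_zero]

lemma add_single_inr_comp_inl (z : σ ⊕ τ → K) (j : τ) (t : K) :
    (z + Pi.single (Sum.inr j) t) ∘ Sum.inl = z ∘ Sum.inl := by
  rw [Pi.add_comp, Pi.single, Sum.update_inr_comp_inl, Pi.zero_comp, add_zero]

lemma add_single_inr_comp_inr (z : σ ⊕ τ → K) (j : τ) (t : K) :
    (z + Pi.single (Sum.inr j) t) ∘ Sum.inr = z ∘ Sum.inr + Pi.single j t := by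
  rw [Pi.add_comp, Pi.single, Sum.update_inr_comp_inr, Pi.zero_comp, Pi.single]

lemma partialDiff_sumMul_inl (g : (σ → K) → K) (h : (τ → K) → K) (i : σ) (z : σ ⊕ τ → K) :
    partialDiff (sumMul g h) (Sum.inl i) z =
      partialDiff g i (z ∘ Sum.inl) * h (z ∘ Sum.inr) := by
  rw [partialDiff, sumMul, add_single_inl_comp_inl, add_single_inl_comp_inr, sumMul, ← sub_mul,
    ← partialDiff]

lemma partialDiff_sumMul_inr (g : (σ → K) → K) (h : (τ → K) → K) (j : τ) (z : σ ⊕ τ → K) :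
    partialDiff (sumMul g h) (Sum.inr j) z =
      g (z ∘ Sum.inl) * partialDiff h j (z ∘ Sum.inr) := by
  rw [partialDiff, sumMul, add_single_inr_comp_inl, add_single_inr_comp_inr, sumMul, ← mul_sub,
    ← partialDiff]

lemma IsMultiaffine.sumMul {g : (σ → K) → K} {h : (τ → K) → K} (hg : IsMultiaffine g)
    (hh : IsMultiaffine h) : IsMultiaffine (sumMul g h) := by
  rintro z (i | j) t
  · rw [partialDiff_sumMul_inl, _root_.sumMul, add_single_inl_comp_inl, add_single_inl_comp_inr, hg,
      _root_.sumMul]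
    ring
  · rw [partialDiff_sumMul_inr, _root_.sumMul, add_single_inr_comp_inl, add_single_inr_comp_inr, hh,
      _root_.sumMul]
    ring

lemma IsStableExtension.sumMul {p : (σ → ℂ) → ℂ} {q : (τ → ℂ) → ℂ} {g : (σ → ℝ) → ℝ}
    {h : (τ → ℝ) → ℝ} (hp : IsStableExtension p g) (hq : IsStableExtension q h) :
    IsStableExtension (sumMul p q) (sumMul g h) where
  continuous :=
    (hp.continuous.comp <| by fun_prop).mul (hq.continuous.comp <| by fun_prop)
  multiaffine := hp.multiaffine.sumMul hq.multiaffine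
  apply_ofReal x :=
    (congrArg₂ (· * ·) (hp.apply_ofReal _) (hq.apply_ofReal _)).trans (Complex.ofReal_mul _ _).symm
  ne_zero z hz :=
    mul_ne_zero (hp.ne_zero _ fun i => hz (.inl i)) (hq.ne_zero _ fun j => hz (.inr j))

lemma IsRealStable.sumMul {g : (σ → ℝ) → ℝ} {h : (τ → ℝ) → ℝ} (hg : IsRealStable g)
    (hh : IsRealStable h) : IsRealStable (sumMul g h) :=
  let ⟨_, hp⟩ := hg; let ⟨_, hq⟩ := hh; ⟨_, hp.sumMul hq⟩

lemma avgDiff_sumMul_div_le {g : (σ → ℝ) → ℝ} {h : (τ → ℝ) → ℝ} {z : σ ⊕ τ → ℝ} {β s : ℝ} {i : σ}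
    {j : τ} (hβ : β ∈ Set.Icc 0 1) (hg : AboveRoots g (z ∘ Sum.inl))
    (hh : AboveRoots h (z ∘ Sum.inr))
    (hi : partialDiff g i (z ∘ Sum.inl) / g (z ∘ Sum.inl) ≤ s)
    (hj : partialDiff h j (z ∘ Sum.inr) / h (z ∘ Sum.inr) ≤ s) :
    avgDiff (Sum.inl i) (Sum.inr j) β (sumMul g h) z / sumMul g h z ≤ s := by
  rw [avgDiff_div, partialDiff_sumMul_inl, partialDiff_sumMul_inr, sumMul,
    mul_div_mul_right _ _ (hh _ le_rfl).ne', mul_div_mul_left _ _ (hg _ le_rfl).ne']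
  exact (convex_Iic s) hi hj hβ.1 (sub_nonneg.mpr hβ.2) (add_sub_cancel β 1)

end SumMul

section StarProjection

variable {n : Type*} [Fintype n] {P : Matrix n n ℂ}

lemma star_dotProduct_self (w : n → ℂ) :
    star w ⬝ᵥ w = ((∑ i, ‖w i‖ ^ 2 : ℝ) : ℂ) := by
  simp [dotProduct, Complex.conj_mul']

lemma sum_norm_sq_pos {w : n → ℂ} (hw : w ≠ 0) : 0 < ∑ i, ‖w i‖ ^ 2 := by
  obtain ⟨i, hi⟩ := Function.ne_iff.mp hw
  exact Finset.sum_pos' (fun _ _ => sq_nonneg _)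
    ⟨i, Finset.mem_univ i, pow_pos (norm_pos_iff.mpr hi) 2⟩

lemma sum_norm_sq_row (hP : IsStarProjection P) (i : n) : ∑ j, ‖P i j‖ ^ 2 = (P i i).re := by
  have hdiag : ((∑ j, ‖P i j‖ ^ 2 : ℝ) : ℂ) = (P * Pᴴ) i i := by
    simp [mul_apply, Complex.mul_conj']
  rw [← star_eq_conjTranspose, hP.isSelfAdjoint.star_eq, hP.isIdempotentElem.eq] at hdiag
  rw [← hdiag, Complex.ofReal_re]

lemma re_diag_le_one (hP : IsStarProjection P) (i : n) : (P i i).re ≤ 1 := by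
  have hle : (P i i).re ^ 2 ≤ (P i i).re :=
    calc (P i i).re ^ 2 ≤ ‖P i i‖ ^ 2 := sq_le_sq' (abs_le.mp (Complex.abs_re_le_norm _)).1
          (Complex.re_le_norm _)
      _ ≤ ∑ j, ‖P i j‖ ^ 2 :=
          Finset.single_le_sum (fun j _ => sq_nonneg ‖P i j‖) (Finset.mem_univ i)
      _ = (P i i).re := sum_norm_sq_row hP i
  nlinarith

lemma norm_mulVec_apply_sq_le (hP : IsStarProjection P) (w : n → ℂ) (i : n) :
    ‖(P *ᵥ w) i‖ ^ 2 ≤ (P i i).re * ∑ j, ‖w j‖ ^ 2 :=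
  calc ‖(P *ᵥ w) i‖ ^ 2 ≤ (∑ j, ‖P i j‖ * ‖w j‖) ^ 2 := by
        gcongr
        exact norm_sum_le_of_le _ fun j _ => norm_mul_le _ _
    _ ≤ (∑ j, ‖P i j‖ ^ 2) * ∑ j, ‖w j‖ ^ 2 := Finset.sum_mul_sq_le_sq_mul_sq _ _ _
    _ = (P i i).re * ∑ j, ‖w j‖ ^ 2 := by rw [sum_norm_sq_row hP]

open scoped Matrix.Norms.L2Operator in
lemma sum_norm_mulVec_sq_le (hP : IsStarProjection P) (w : n → ℂ) :
    ∑ i, ‖(P *ᵥ w) i‖ ^ 2 ≤ ∑ i, ‖w i‖ ^ 2 := by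
  classical
  have hnorm : ‖WithLp.toLp 2 (P *ᵥ w)‖ ≤ ‖WithLp.toLp 2 w‖ :=
    (l2_opNorm_mulVec P (WithLp.toLp 2 w)).trans
      (mul_le_of_le_one_left (norm_nonneg _) (IsStarProjection.norm_le P hP))
  simpa only [EuclideanSpace.norm_sq_eq] using pow_le_pow_left₀ (norm_nonneg _) hnorm 2

end StarProjection

section Compression

variable {n : Type*} [Fintype n] [DecidableEq n]

lemma det_smul_one_add_mul_comm {R : Type*} [CommRing R] (δ : R) (A B : Matrix n n R) :
    (δ • 1 + A * B).det = (δ • 1 + B * A).det := by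
  have heval : ∀ C D : Matrix n n R, (δ • 1 + C * D).det = (-C * D).charpoly.eval δ := fun C D => by
    rw [Matrix.eval_charpoly, scalar_apply, ← smul_one_eq_diagonal, Matrix.neg_mul, sub_neg_eq_add]
  rw [heval, heval, Matrix.neg_mul, ← Matrix.mul_neg, charpoly_mul_comm]

lemma isMultiaffine_det_add_diagonal_mul {R : Type*} [CommRing R] (D A : Matrix n n R) :
    IsMultiaffine fun x => (D + diagonal x * A).det := by
  have hrow : ∀ (x : n → R) k t, (D + diagonal (x + Pi.single k t) * A).det =
      (D + diagonal x * A).det + t * ((D + diagonal x * A).updateRow k (A k)).det := by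
    intro x k t
    have hupdate : D + diagonal (x + Pi.single k t) * A =
        (D + diagonal x * A).updateRow k ((D + diagonal x * A) k + t • A k) := by
      ext i j
      rcases eq_or_ne i k with rfl | hi
      · simp [diagonal_mul, add_mul, add_assoc]
      · simp [diagonal_mul, hi]
    rw [hupdate, det_updateRow_add, det_updateRow_smul, updateRow_eq_self]
  intro x k t
  simp only [partialDiff, hrow, one_mul, add_sub_cancel_left]

/-- The determinant of `δ + P diag(z) P`, whose zeros control the spectrum of the compression
`P diag(z) P`. -/
def compressionDet (P : Matrix n n ℂ) (δ : ℝ) (z : n → ℂ) : ℂ :=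
  ((δ : ℂ) • 1 + P * diagonal z * P).det

/-- The restriction of `compressionDet P δ` to real points, where it is real for Hermitian `P`. -/
def realCompressionDet (P : Matrix n n ℂ) (δ : ℝ) (x : n → ℝ) : ℝ :=
  (compressionDet P δ fun i => (x i : ℂ)).re

variable {P : Matrix n n ℂ} {δ : ℝ}

lemma isHermitian_compression (hP : P.IsHermitian) (x : n → ℝ) :
    (P * diagonal (fun i => (x i : ℂ)) * P).IsHermitian := by
  have hdiag : (diagonal fun i => (x i : ℂ)).IsHermitian :=
    isHermitian_diagonal_of_self_adjoint _ <| funext fun i => Complex.conj_ofReal (x i)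
  simpa only [hP.eq] using isHermitian_conjTranspose_mul_mul P hdiag

lemma isHermitian_smul_one_add_compression (hP : P.IsHermitian) (δ : ℝ) (x : n → ℝ) :
    ((δ : ℂ) • 1 + P * diagonal (fun i => (x i : ℂ)) * P).IsHermitian :=
  (isHermitian_one.smul (Complex.conj_ofReal δ)).add (isHermitian_compression hP x)

lemma isMultiaffine_compressionDet (hP : IsIdempotentElem P) (δ : ℝ) :
    IsMultiaffine (compressionDet P δ) := by
  have hcomm : compressionDet P δ = fun z => ((δ : ℂ) • 1 + diagonal z * P).det := by
    funext z
    rw [compressionDet, mul_assoc, det_smul_one_add_mul_comm, mul_assoc, hP.eq]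
  rw [hcomm]
  exact isMultiaffine_det_add_diagonal_mul _ _

lemma ofReal_realCompressionDet (hP : P.IsHermitian) (δ : ℝ) (x : n → ℝ) :
    (realCompressionDet P δ x : ℂ) = compressionDet P δ fun i => (x i : ℂ) := by
  refine Complex.conj_eq_iff_re.mp ?_
  rw [compressionDet, ← Complex.star_def, ← det_conjTranspose,
    (isHermitian_smul_one_add_compression hP δ x).eq]

lemma dotProduct_smul_one_add_compression (hP : P.IsHermitian) (z w : n → ℂ) :
    star w ⬝ᵥ (((δ : ℂ) • 1 + P * diagonal z * P) *ᵥ w) =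
      δ * ((∑ i, ‖w i‖ ^ 2 : ℝ) : ℂ) + ∑ i, z i * ((‖(P *ᵥ w) i‖ ^ 2 : ℝ) : ℂ) := by
  have hcompression : star w ⬝ᵥ ((P * diagonal z * P) *ᵥ w) =
      star (P *ᵥ w) ⬝ᵥ (diagonal z *ᵥ (P *ᵥ w)) := by
    rw [← mulVec_mulVec, ← mulVec_mulVec, dotProduct_mulVec, star_mulVec, hP.eq]
  rw [add_mulVec, dotProduct_add, smul_mulVec, one_mulVec, dotProduct_smul, star_dotProduct_self,
    hcompression, smul_eq_mul]
  simp only [dotProduct, mulVec_diagonal, Pi.star_apply, Complex.star_def, mul_left_comm _ (z _),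
    Complex.conj_mul', Complex.ofReal_pow]

theorem isStableExtension_compressionDet (hP : IsStarProjection P) (hδ : δ ≠ 0) :
    IsStableExtension (compressionDet P δ) (realCompressionDet P δ) where
  continuous := by
    unfold compressionDet
    fun_prop
  multiaffine := isMultiaffine_compressionDet hP.isIdempotentElem δ
  apply_ofReal x := (ofReal_realCompressionDet hP.isSelfAdjoint δ x).symm
  ne_zero z hz hdet := by
    obtain ⟨w, hw, hker⟩ := exists_mulVec_eq_zero_iff.mpr hdet
    have hform := dotProduct_smul_one_add_compression (δ := δ) hP.isSelfAdjoint z w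
    rw [hker, dotProduct_zero] at hform
    have him : ∑ i, (z i).im * ‖(P *ᵥ w) i‖ ^ 2 = 0 := by
      simpa only [Complex.zero_im, Complex.add_im, Complex.im_ofReal_mul, Complex.ofReal_im,
        mul_zero, zero_mul, zero_add, Complex.im_sum, Complex.im_mul_ofReal] using
        (congrArg Complex.im hform).symm
    have hPw : ∀ i, (P *ᵥ w) i = 0 := fun i => by
      have := (Finset.sum_eq_zero_iff_of_nonneg fun i _ =>
        mul_nonneg (hz i).le (sq_nonneg ‖(P *ᵥ w) i‖)).mp him i (Finset.mem_univ i)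
      simpa [(hz i).ne'] using this
    simp only [hPw, norm_zero, ne_eq, OfNat.ofNat_ne_zero, not_false_eq_true, zero_pow,
      Complex.ofReal_zero, mul_zero, Finset.sum_const_zero, add_zero] at hform
    exact mul_ne_zero hδ (sum_norm_sq_pos hw).ne' (by exact_mod_cast hform.symm)

lemma isRealStable_realCompressionDet (hP : IsStarProjection P) (hδ : δ ≠ 0) :
    IsRealStable (realCompressionDet P δ) :=
  ⟨_, isStableExtension_compressionDet hP hδ⟩

open scoped ComplexOrder in
lemma realCompressionDet_pos (hP : IsStarProjection P) {r : ℝ} {a x : n → ℝ} (hr : 0 ≤ r)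
    (ha : 0 ≤ a) (hx : ∀ i, -(r + a i) ≤ x i) (hδ : r + ∑ i, a i * (P i i).re < δ) :
    0 < realCompressionDet P δ x := by
  have hform : ∀ w : n → ℂ, w ≠ 0 →
      0 < δ * ∑ i, ‖w i‖ ^ 2 + ∑ i, x i * ‖(P *ᵥ w) i‖ ^ 2 := by
    intro w hw
    have hr' := mul_le_mul_of_nonneg_left (sum_norm_mulVec_sq_le hP w) hr
    have ha' : ∑ i, a i * ‖(P *ᵥ w) i‖ ^ 2 ≤ (∑ i, a i * (P i i).re) * ∑ i, ‖w i‖ ^ 2 := by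
      simp only [Finset.sum_mul _ _ (∑ i, ‖w i‖ ^ 2), mul_assoc]
      gcongr with i
      · exact ha i
      · exact norm_mulVec_apply_sq_le hP w i
    have hx' : -(r * ∑ i, ‖(P *ᵥ w) i‖ ^ 2 + ∑ i, a i * ‖(P *ᵥ w) i‖ ^ 2) ≤
        ∑ i, x i * ‖(P *ᵥ w) i‖ ^ 2 := by
      rw [Finset.mul_sum, ← Finset.sum_add_distrib, ← Finset.sum_neg_distrib]
      gcongr with i
      rw [← add_mul, ← neg_mul]
      gcongr
      exact hx i
    have := mul_lt_mul_of_pos_right hδ (sum_norm_sq_pos hw)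
    linarith
  have hposDef : ((δ : ℂ) • 1 + P * diagonal (fun i => (x i : ℂ)) * P).PosDef := by
    refine .of_dotProduct_mulVec_pos (isHermitian_smul_one_add_compression hP.isSelfAdjoint δ x)
      fun w hw => ?_
    rw [dotProduct_smul_one_add_compression hP.isSelfAdjoint]
    exact_mod_cast hform w hw
  exact (Complex.pos_iff.mp hposDef.det_pos).1

lemma aboveRoots_realCompressionDet (hP : IsStarProjection P) {r : ℝ} {x : n → ℝ} (hr : 0 ≤ r)
    (hrδ : r < δ) (hx : ∀ i, -r ≤ x i) : AboveRoots (realCompressionDet P δ) x := fun y hy =>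
  realCompressionDet_pos hP hr le_rfl (fun i => by simpa using (hx i).trans (hy i)) (by simpa)

/- If the ratio were larger, `realCompressionDet P δ` would vanish at a distance `t < (δ - r) / ε`
below `x` in direction `i`, where `realCompressionDet_pos` still applies. -/
lemma partialDiff_realCompressionDet_div_le (hP : IsStarProjection P) {ε r : ℝ} {x : n → ℝ}
    (hr : 0 ≤ r) (hrδ : r < δ) (hx : ∀ i, -r ≤ x i) (hε : 0 < ε) {i : n} (hi : (P i i).re ≤ ε) :
    partialDiff (realCompressionDet P δ) i x / realCompressionDet P δ x ≤ ε / (δ - r) := by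
  have hg := aboveRoots_realCompressionDet hP hr hrδ hx x le_rfl
  have hδr : 0 < δ - r := sub_pos.mpr hrδ
  by_contra! hlt
  have hd := pos_of_mul_pos_left ((div_pos hε hδr).trans hlt) (inv_nonneg.mpr hg.le)
  rw [div_lt_div_iff₀ hδr hg] at hlt
  set t := realCompressionDet P δ x / partialDiff (realCompressionDet P δ) i x with ht
  have ht0 : 0 ≤ t := (div_pos hg hd).le
  have htε : t * ε < δ - r := by
    rw [div_mul_eq_mul_div, div_lt_iff₀ hd]
    linarith
  have hpos : 0 < realCompressionDet P δ (x - Pi.single i t) := by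
    refine realCompressionDet_pos hP (a := Pi.single i t) hr (Pi.single_nonneg.mpr ht0)
      (fun j => ?_) ?_
    · rw [Pi.sub_apply]
      linarith [hx j]
    · have hsum : ∑ j, (Pi.single i t : n → ℝ) j * (P j j).re = t * (P i i).re :=
        single_dotProduct _ t i
      rw [hsum]
      linarith [mul_le_mul_of_nonneg_left hi ht0]
  have hstable := isRealStable_realCompressionDet hP (hr.trans_lt hrδ).ne'
  rw [hstable.multiaffine.sub_single, ht, div_mul_cancel₀ _ hd.ne', sub_self] at hpos
  exact hpos.false

end Compression

section Numeric

lemma two_mul_sqrt_add_le_three_mul_rpow {x α : ℝ} (hx : 0 ≤ x) (hx' : x ≤ 1)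
    (hα : α ∈ Set.Icc 0 (1 / 2)) : 2 * √x + x ≤ 3 * x ^ α := by
  have hsqrt : √x ≤ x ^ α := by
    rw [Real.sqrt_eq_rpow]
    exact Real.rpow_le_rpow_of_exponent_ge' hx hx' hα.1 hα.2
  have hle : x ≤ √x := Real.le_sqrt_of_sq_le (pow_le_of_le_one hx hx' two_ne_zero)
  linarith

/- For `x < 0` the convention for real powers is `x ^ α = |x| ^ α * cos (α * π)`. -/
lemma max_zero_rpow_le_rpow (x : ℝ) {α : ℝ} (hα : α ∈ Set.Ioc 0 (1 / 2)) :
    max x 0 ^ α ≤ x ^ α := by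
  rcases le_total 0 x with hx | hx
  · rw [max_eq_left hx]
  rcases hx.eq_or_lt with rfl | hx
  · rw [max_self]
  have hcos : 0 ≤ Real.cos (α * Real.pi) := Real.cos_nonneg_of_neg_pi_div_two_le_of_le
    (by nlinarith [hα.1, Real.pi_pos]) (by nlinarith [hα.2, Real.pi_pos])
  rw [max_eq_right hx.le, Real.zero_rpow hα.1.ne', Real.rpow_def_of_neg hx]
  positivity

lemma div_two_mul_sqrt_add_sub_sqrt {ε : ℝ} (hε : 0 ≤ ε) :
    ε / (2 * √ε + ε - √ε) = 1 - (1 + √ε)⁻¹ := by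
  have hfactor : 2 * √ε + ε - √ε = √ε * (1 + √ε) := by
    linarith [Real.mul_self_sqrt hε]
  rw [hfactor, ← div_div, Real.div_sqrt]
  field_simp
  ring

end Numeric

section Selection

variable {n : Type*} [DecidableEq n]

lemma sum_avgDir_inl_inr (S : Finset n) {b : n → ℝ} (hb : ∀ i ∉ S, b i = 0) :
    ∑ i ∈ S, avgDir (Sum.inl i) (Sum.inr i) (b i) =
      Sum.elim b ((S : Set n).indicator 1 - b) := by
  funext j
  rcases j with j | j <;> by_cases hj : j ∈ S <;>
    simp [avgDir, Finset.sum_apply, Pi.single_apply, hj, hb]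

lemma sum_single_inl_or_inr (S : Finset n) {c : n → n ⊕ n}
    (hc : ∀ i, c i = Sum.inl i ∨ c i = Sum.inr i) :
    ∑ i ∈ S, (Pi.single (c i) 1 : n ⊕ n → ℝ) =
      Sum.elim ((S.filter fun i => c i = Sum.inl i : Set n).indicator 1)
        ((S : Set n).indicator 1 - (S.filter fun i => c i = Sum.inl i : Set n).indicator 1) := by
  have hinl : ∀ i j, Sum.inl j = c i ↔ j = i ∧ c j = Sum.inl j := fun i j => by
    grind
  have hinr : ∀ i j, Sum.inr j = c i ↔ j = i ∧ c j ≠ Sum.inl j := fun i j => by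
    grind
  funext j
  rcases j with j | j <;> by_cases hj : j ∈ S <;> by_cases hcj : c j = Sum.inl j <;>
    simp [Finset.sum_apply, Pi.single_apply, hinl, hinr, hj, hcj]

variable [Fintype n] {P : Matrix n n ℂ}

theorem exists_subset_aboveRoots (hP : IsStarProjection P) {ε : ℝ} (hε : 0 < ε) {S : Finset n}
    (hS : ∀ i ∈ S, (P i i).re ≤ ε) {b : n → ℝ} (hb : ∀ i, b i ∈ Set.Icc 0 1)
    (hbS : ∀ i ∉ S, b i = 0) :
    ∃ T ⊆ S, AboveRoots (realCompressionDet P (2 * √ε + ε)) ((T : Set n).indicator 1 - b) ∧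
      AboveRoots (realCompressionDet P (2 * √ε + ε)) (b - (T : Set n).indicator 1) := by
  set r := √ε
  set δ := 2 * r + ε
  set g := realCompressionDet P δ
  have hr : 0 < r := Real.sqrt_pos.mpr hε
  have hrδ : r < δ := by linarith
  have hg : IsRealStable g := isRealStable_realCompressionDet hP (hr.trans hrδ).ne'
  set c₀ : n ⊕ n → ℝ := Sum.elim b ((S : Set n).indicator 1 - b) with hc₀
  have hc₀_le : ∀ j, c₀ j ≤ 1 := Sum.rec (fun i => (hb i).2) fun i =>
    (sub_le_self _ (hb i).1).trans (Set.indicator_apply_le' (fun _ => le_rfl) fun _ => zero_le_one)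
  have hstart_ge : ∀ j, -r ≤ (-r • c₀) j := fun j => by
    rw [Pi.smul_apply, smul_eq_mul, neg_mul, neg_le_neg_iff]
    exact mul_le_of_le_one_right hr.le (hc₀_le j)
  have hstart : ∀ f : n → n ⊕ n, AboveRoots g ((-r • c₀) ∘ f) := fun f =>
    aboveRoots_realCompressionDet hP hr.le hrδ fun i => hstart_ge (f i)
  have hratio : ∀ i ∈ S, avgDiff (Sum.inl i) (Sum.inr i) (b i) (sumMul g g) (-r • c₀) /
      sumMul g g (-r • c₀) ≤ 1 - (1 + r)⁻¹ := fun i hi => by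
    rw [← div_two_mul_sqrt_add_sub_sqrt hε.le]
    have hpartial : ∀ f : n → n ⊕ n,
        partialDiff g i ((-r • c₀) ∘ f) / g ((-r • c₀) ∘ f) ≤ ε / (δ - r) := fun f =>
      partialDiff_realCompressionDet_div_le hP hr.le hrδ (fun i => hstart_ge (f i)) hε (hS i hi)
    exact avgDiff_sumMul_div_le (hb i) (hstart _) (hstart _) (hpartial _) (hpartial _)
  obtain ⟨c, hc, hroots⟩ := (hg.sumMul hg).exists_choice_aboveRoots
    ((hstart _).sumMul (hstart _)) Sum.inl Sum.inr (by positivity) S (fun i _ => hb i) hratio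
  set T := S.filter fun i => c i = Sum.inl i
  have hend : -r • c₀ + (1 + r) • ∑ i ∈ S, avgDir (Sum.inl i) (Sum.inr i) (b i) -
      ∑ i ∈ S, Pi.single (c i) 1 =
      Sum.elim (b - (T : Set n).indicator 1) ((T : Set n).indicator 1 - b) := by
    rw [sum_avgDir_inl_inr S hbS, sum_single_inl_or_inr S hc, ← hc₀, ← add_smul,
      neg_add_cancel_comm_assoc, one_smul, hc₀, ← Sum.elim_sub_sub, sub_sub_sub_cancel_left]
  rw [hend] at hroots
  exact ⟨T, S.filter_subset _, aboveRoots_inr_of_sumMul (hstart Sum.inl) hroots,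
    aboveRoots_inl_of_sumMul (hstart Sum.inr) hroots⟩

end Selection

section Norm

variable {n : Type*} [Fintype n] [DecidableEq n] {P : Matrix n n ℂ} {δ : ℝ}

lemma compression_add_const (hP : IsIdempotentElem P) (x : n → ℝ) (s : ℝ) :
    P * diagonal (fun i => ((x i + s : ℝ) : ℂ)) * P =
      P * diagonal (fun i => (x i : ℂ)) * P + (s : ℂ) • P := by
  have hdiag : diagonal (fun i => ((x i + s : ℝ) : ℂ)) =
      diagonal (fun i => (x i : ℂ)) + (s : ℂ) • 1 := by
    simp only [Complex.ofReal_add, smul_one_eq_diagonal, diagonal_add]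
  rw [hdiag, mul_add, add_mul, mul_smul_one, smul_mul_assoc, hP.eq]

/- An eigenvalue `l < -δ` has its eigenvector in the range of `P`, where shifting `x` by the
positive constant `-l - δ` turns the eigenvalue into `-δ`. -/
lemma neg_le_eigenvalue_of_aboveRoots (hP : IsIdempotentElem P) (hδ : 0 ≤ δ) {x : n → ℝ}
    (hx : AboveRoots (realCompressionDet P δ) x) {l : ℝ} {w : n → ℂ} (hw : w ≠ 0)
    (hl : (P * diagonal (fun i => (x i : ℂ)) * P) *ᵥ w = (l : ℂ) • w) : -δ ≤ l := by
  by_contra! hlt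
  have hl0 : (l : ℂ) ≠ 0 := Complex.ofReal_ne_zero.mpr (by linarith)
  have hPw : P *ᵥ w = w := by
    have hPl := congrArg (P *ᵥ ·) hl
    simp only [mulVec_mulVec, ← mul_assoc, hP.eq, mulVec_smul] at hPl
    rw [hl] at hPl
    exact (smul_right_injective _ hl0 hPl).symm
  have hker : ((δ : ℂ) • 1 + P * diagonal (fun i => ((x i + (-l - δ) : ℝ) : ℂ)) * P) *ᵥ w = 0 := by
    rw [compression_add_const hP, add_mulVec, add_mulVec, hl, smul_mulVec, smul_mulVec, one_mulVec,
      hPw, ← add_smul, ← add_smul]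
    have hzero : (δ : ℂ) + (l + (-l - δ : ℝ)) = 0 := by
      push_cast
      ring
    rw [hzero, zero_smul]
  have hpos := hx (fun i => x i + (-l - δ)) fun i => le_add_of_nonneg_right (by linarith)
  rw [realCompressionDet, compressionDet, exists_mulVec_eq_zero_iff.mp ⟨w, hw, hker⟩] at hpos
  exact hpos.false

open scoped Matrix.Norms.L2Operator

lemma norm_le_of_abs_eigenvalues_le {A : Matrix n n ℂ} (hA : A.IsHermitian) (hδ : 0 ≤ δ)
    (h : ∀ i, |hA.eigenvalues i| ≤ δ) : ‖A‖ ≤ δ := by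
  rw [← cfc_id ℝ A hA, norm_cfc_le_iff id A hδ]
  intro l hl
  rw [hA.spectrum_real_eq_range_eigenvalues] at hl
  obtain ⟨i, rfl⟩ := hl
  exact h i

lemma norm_compression_le_of_aboveRoots (hP : IsStarProjection P) (hδ : 0 ≤ δ) {x : n → ℝ}
    (hx : AboveRoots (realCompressionDet P δ) x)
    (hx' : AboveRoots (realCompressionDet P δ) (-x)) :
    ‖P * diagonal (fun i => (x i : ℂ)) * P‖ ≤ δ := by
  have hA := isHermitian_compression hP.isSelfAdjoint x
  refine norm_le_of_abs_eigenvalues_le hA hδ fun i => abs_le.mpr ?_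
  have hw : (hA.eigenvectorBasis i).ofLp ≠ 0 := by
    simpa using hA.eigenvectorBasis.orthonormal.ne_zero i
  have hl := hA.mulVec_eigenvectorBasis i
  have hneg : (P * diagonal (fun j => ((-x) j : ℂ)) * P) *ᵥ (hA.eigenvectorBasis i).ofLp =
      ((-hA.eigenvalues i : ℝ) : ℂ) • (hA.eigenvectorBasis i).ofLp := by
    have hdiag : diagonal (fun j => ((-x) j : ℂ)) = -diagonal (fun j => (x j : ℂ)) := by
      simp only [Pi.neg_apply, Complex.ofReal_neg, diagonal_neg]
    rw [hdiag, mul_neg, neg_mul, neg_mulVec, hl, Complex.coe_smul, neg_smul]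
  exact ⟨neg_le_eigenvalue_of_aboveRoots hP.isIdempotentElem hδ hx hw hl,
    le_of_neg_le_neg (neg_le_eigenvalue_of_aboveRoots hP.isIdempotentElem hδ hx' hw hneg)⟩

theorem exists_subset_norm_le_of_pos (hP : IsStarProjection P) {ε : ℝ} (hε : 0 < ε) {S : Finset n}
    (hS : ∀ i ∈ S, (P i i).re ≤ ε) {b : n → ℝ} (hb : ∀ i, b i ∈ Set.Icc 0 1)
    (hbS : ∀ i ∉ S, b i = 0) :
    ∃ T ⊆ S, ‖P * diagonal (fun i => if i ∈ T then 1 else 0) * P -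
      P * diagonal (fun i => (b i : ℂ)) * P‖ ≤ 2 * √ε + ε := by
  obtain ⟨T, hTS, hpos, hneg⟩ := exists_subset_aboveRoots hP hε hS hb hbS
  refine ⟨T, hTS, ?_⟩
  rw [← neg_sub] at hneg
  convert norm_compression_le_of_aboveRoots hP (by positivity) hpos hneg using 2
  rw [← sub_mul, ← mul_sub, diagonal_sub]
  congr 3
  funext i
  simp [Set.indicator_apply, apply_ite]

lemma diagonal_mul_eq_zero (hP : IsStarProjection P) {S : Finset n}
    (hS : ∀ i ∈ S, (P i i).re ≤ 0) {b : n → ℂ} (hbS : ∀ i ∉ S, b i = 0) : diagonal b * P = 0 := by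
  ext i j
  rw [diagonal_mul, Matrix.zero_apply, mul_eq_zero, or_iff_not_imp_left]
  intro hbi
  have hi := hS i (not_imp_comm.mp (hbS i) hbi)
  rw [← sum_norm_sq_row hP] at hi
  have hij := (Finset.single_le_sum (fun j _ => sq_nonneg ‖P i j‖) (Finset.mem_univ j)).trans hi
  exact norm_eq_zero.mp <| (sq_nonpos_iff _).mp hij

theorem exists_subset_norm_le (hP : IsStarProjection P) {ε : ℝ} (hε : 0 ≤ ε) {S : Finset n}
    (hS : ∀ i ∈ S, (P i i).re ≤ ε) {b : n → ℝ} (hb : ∀ i, b i ∈ Set.Icc 0 1)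
    (hbS : ∀ i ∉ S, b i = 0) :
    ∃ T ⊆ S, ‖P * diagonal (fun i => if i ∈ T then 1 else 0) * P -
      P * diagonal (fun i => (b i : ℂ)) * P‖ ≤ 2 * √ε + ε := by
  rcases hε.eq_or_lt with rfl | hε
  · refine ⟨∅, S.empty_subset, ?_⟩
    have hbP : diagonal (fun i => (b i : ℂ)) * P = 0 :=
      diagonal_mul_eq_zero hP hS fun i hi => Complex.ofReal_eq_zero.mpr (hbS i hi)
    simp [mul_assoc, hbP]
  · exact exists_subset_norm_le_of_pos hP hε hS hb hbS

theorem stmt12_general (hP : IsStarProjection P) {ε α : ℝ} (hε : 0 ≤ ε)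
    (hα : α ∈ Set.Icc 0 (1 / 2)) {S : Finset n} (hS : ∀ i ∈ S, (P i i).re ≤ ε) {b : n → ℝ}
    (hb : ∀ i, b i ∈ Set.Icc 0 1) (hbS : ∀ i ∉ S, b i = 0) :
    ∃ T ⊆ S, ‖P * diagonal (fun i => if i ∈ T then 1 else 0) * P -
      P * diagonal (fun i => (b i : ℂ)) * P‖ ≤ 3 * ε ^ α := by
  have hε' : 0 ≤ min ε 1 := le_min hε zero_le_one
  obtain ⟨T, hTS, hT⟩ := exists_subset_norm_le hP hε'
    (fun i hi => le_min (hS i hi) (re_diag_le_one hP i)) hb hbS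
  refine ⟨T, hTS, hT.trans ?_⟩
  calc 2 * √(min ε 1) + min ε 1 ≤ 3 * min ε 1 ^ α :=
        two_mul_sqrt_add_le_three_mul_rpow hε' (min_le_right _ _) hα
    _ ≤ 3 * ε ^ α := by
        gcongr
        · exact hα.1
        · exact min_le_left _ _

end Norm

/-- There is a universal constant `C > 0` such that the following holds: if
`P ∈ M_m(ℂ)` is a projection matrix, `Q` is the diagonal projection with support
`S ⊆ {1, …, m}`, `B` is a diagonal matrix with `0 ≤ B ≤ Q` (its diagonal entries `b i`
lie in `[0,1]` and vanish off `S`), and the diagonal entries of `QPQ` are each at most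
`ε` (i.e. `P i i ≤ ε` for `i ∈ S`), then there is a diagonal projection `Q' ≤ Q`
(i.e. with support `S' ⊆ S`) such that `‖PQ'P − PBP‖ ≤ C ε^(1/8)`. -/
theorem stmt12 :
    ∃ C : ℝ, 0 < C ∧
      ∀ (m : ℕ) (ε : ℝ) (P : Matrix (Fin m) (Fin m) ℂ),
        Pᴴ = P → P * P = P →
        ∀ S : Finset (Fin m),
          (∀ i ∈ S, (P i i).re ≤ ε) →
          ∀ b : Fin m → ℝ,
            (∀ i, 0 ≤ b i) → (∀ i, b i ≤ 1) → (∀ i ∉ S, b i = 0) →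
            ∃ S' : Finset (Fin m), S' ⊆ S ∧
              opNorm (P * diagProj S' * P
                  - P * Matrix.diagonal (fun i => (b i : ℂ)) * P)
                ≤ C * ε ^ ((1 : ℝ) / 8) := by
  refine ⟨3, three_pos, fun m ε P hadj hidem S hS b hb₀ hb₁ hbS => ?_⟩
  obtain ⟨T, hTS, hT⟩ := stmt12_general ⟨hidem, hadj⟩ (le_max_right ε 0)
    (α := 1 / 8) (by norm_num) (fun i hi => (hS i hi).trans (le_max_left ε 0))
    (fun i => ⟨hb₀ i, hb₁ i⟩) hbS
  exact ⟨T, hTS, hT.trans <| mul_le_mul_of_nonneg_left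
    (max_zero_rpow_le_rpow ε (by norm_num)) zero_le_three⟩
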